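/- Let n ≥ 1 be an integer and let A be a subset of G = (ℤ/5ℤ)^n with |A| > 0.3·5^n and 3A ≠ G. If F is a subgroup of G of index 5 and there is a coset c + F with |A ∩ (c + F)| > 0.5·|F|, then A has non-empty intersection with at most three cosets of F. -/

import Mathlib

open Pointwise

/-- `itSum k A` is the `k`-fold sumset `kA = {a₁ + ⋯ + a_k : aᵢ ∈ A}`. -/
def itSum {G : Type*} [AddCommGroup G] : ℕ → Set G → Set G
  | 0, _ => {0}
  | (k + 1), A => itSum k A + A

/-!
Let `g ∉ 3A` and let `A_q` be the part of `A` in the coset `q` of `F`. Whenever `q₁ + q₂ + q₃` is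
the class of `g`, the sumset `A_q₁ + A_q₂ + A_q₃` misses an element of a coset of `F`. A weak form
of Kneser's theorem, proved by iterating the Dyson e-transform, then bounds these three parts.

Let `q` be the dense coset and write the class of `g` as `q + q + m`. Since `A_q + A_q` is a full
coset, `A_m` is empty. If `A` met all other cosets, put `e = q - m`, so that these are `m + ie` with
`1 ≤ i ≤ 4`, and the class of `g` is `3m + 7e`. As `1 + 2 + 4 = 7`, the parts in `m + e`, `m + 2e`
and `m + 4e` have total size at most `6/5 |F|`; as `1 + 3 + 3 = 7`, the part in `m + 3e` has size at
most `3/10 |F|`. This leaves `|A| ≤ 3/2 |F| = 3/10 |G|`.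
-/

open Finset Function

section WeakKneser

variable {G : Type*} [AddCommGroup G] [DecidableEq G]

theorem card_stabilizer_dvd_card (B : Finset G) :
    Nat.card (AddAction.stabilizer G B) ∣ #B := by
  set S := AddAction.stabilizer G B with hS
  have hpre : QuotientAddGroup.mk ⁻¹' (QuotientAddGroup.mk '' (B : Set G) : Set (G ⧸ S)) = B := by
    rw [QuotientAddGroup.preimage_image_mk_eq_add, hS, ← AddAction.stabilizer_coe_finset,
      AddAction.add_stabilizer_self]
  have hcard := Nat.card_congr (QuotientAddGroup.preimageMkEquivAddSubgroupProdSet S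
    (QuotientAddGroup.mk '' (B : Set G)))
  rw [hpre, Nat.card_prod, Nat.card_coe_set_eq, Set.ncard_coe_finset] at hcard
  exact ⟨_, hcard⟩

theorem card_le_card_stabilizer {B Y : Finset G} (hB : B.Nonempty)
    (hY : ∀ y ∈ Y, y ∈ AddAction.stabilizer G B) :
    #Y ≤ Nat.card (AddAction.stabilizer G B) := by
  have hfin : (AddAction.stabilizer G B : Set G).Finite := by
    rw [← AddAction.stabilizer_coe_finset]
    exact AddAction.stabilizer_finite hB B.finite_toSet
  rw [← Set.ncard_coe_finset]
  exact Set.ncard_le_ncard hY hfin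

theorem exists_superset_subset_add_card_add_card_le {X Y : Finset G} (hX : X.Nonempty)
    (hY : 0 ∈ Y) :
    ∃ B, X ⊆ B ∧ B ⊆ X + Y ∧ #X + #Y ≤ #B + Nat.card (AddAction.stabilizer G B) := by
  induction Y using Finset.strongInduction generalizing X with
  | H Y ih =>
    by_cases hstab : ∀ y ∈ Y, y ∈ AddAction.stabilizer G X
    · exact ⟨X, Subset.rfl, subset_add_left X hY,
        Nat.add_le_add_left (card_le_card_stabilizer hX hstab) _⟩
    · obtain ⟨y, hyY, a, haX, hya⟩ : ∃ y ∈ Y, ∃ a ∈ X, y + a ∉ X := by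
        simpa only [AddAction.mem_stabilizer_finset', vadd_eq_add, not_forall, exists_prop]
          using hstab
      have hmem {z : G} : z ∈ -a +ᵥ X ↔ a + z ∈ X := by
        rw [mem_neg_vadd_finset_iff, vadd_eq_add]
      have hlt : Y ∩ (-a +ᵥ X) ⊂ Y := by
        refine (ssubset_iff_of_subset inter_subset_left).2 ⟨y, hyY, fun hy ↦ hya ?_⟩
        rw [add_comm]
        exact hmem.1 (mem_inter.1 hy).2
      have hzero : 0 ∈ Y ∩ (-a +ᵥ X) := mem_inter.2 ⟨hY, hmem.2 (by rwa [add_zero])⟩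
      obtain ⟨B, hXB, hBXY, hcard⟩ := ih _ hlt (hX.mono (subset_union_left (s₂ := a +ᵥ Y))) hzero
      exact ⟨B, subset_union_left.trans hXB,
        hBXY.trans (addDysonETransform.subset a (X, Y)),
        (addDysonETransform.card a (X, Y)).symm.trans_le hcard⟩

/- Kneser's theorem gives this for `B = X + Y`; the weaker form has a much shorter proof and
suffices for upper bounds on `#X + #Y`. -/
theorem exists_subset_add_card_add_card_le {X Y : Finset G} (hX : X.Nonempty)
    (hY : Y.Nonempty) :
    ∃ B, B.Nonempty ∧ B ⊆ X + Y ∧ #X + #Y ≤ #B + Nat.card (AddAction.stabilizer G B) := by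
  obtain ⟨y, hy⟩ := hY
  have hzero : 0 ∈ -y +ᵥ Y := by rwa [mem_neg_vadd_finset_iff, vadd_eq_add, add_zero]
  obtain ⟨B, hXB, hBXY, hcard⟩ :=
    exists_superset_subset_add_card_add_card_le (X := y +ᵥ X) hX.vadd_finset hzero
  rw [card_vadd_finset, card_vadd_finset] at hcard
  refine ⟨B, hX.vadd_finset.mono hXB, hBXY.trans_eq ?_, hcard⟩
  rw [vadd_add_assoc, add_vadd_comm, vadd_neg_vadd]

end WeakKneser

theorem five_le_index_and_index_ne_six {K : Type*} [AddCommGroup K]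
    (hK : (Nat.card K).Coprime 6) {S : AddSubgroup K} (hS : S ≠ ⊤) : 5 ≤ S.index ∧ S.index ≠ 6 := by
  have hcop : S.index.Coprime 6 := hK.coprime_dvd_left S.index_dvd_card
  have hone : S.index ≠ 1 := mt AddSubgroup.index_eq_one.1 hS
  constructor
  · by_contra! hlt
    interval_cases S.index <;> contradiction
  · intro h
    norm_num [h] at hcop

section MissingElement

variable {K : Type*} [AddCommGroup K] [Finite K] [DecidableEq K] {X Y Z : Finset K} {g : K}

theorem card_add_card_le_of_notMem_add (hg : g ∉ X + Y) : #X + #Y ≤ Nat.card K := by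
  have := Fintype.ofFinite K
  have hdisj : Disjoint X (Y.image (g - ·)) := by
    rw [disjoint_left]
    intro x hx hx'
    obtain ⟨y, hy, rfl⟩ := mem_image.1 hx'
    exact hg (mem_add.2 ⟨g - y, hx, y, hy, sub_add_cancel g y⟩)
  calc #X + #Y = #(X ∪ Y.image (g - ·)) := by
        rw [card_union_of_disjoint hdisj, card_image_of_injective Y sub_right_injective]
    _ ≤ Nat.card K := by
        rw [Nat.card_eq_fintype_card]
        exact card_le_univ _

theorem card_add_card_le_of_notMem_add_add (hZ : Z.Nonempty) (hg : g ∉ X + Y + Z) :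
    #X + #Y ≤ Nat.card K := by
  obtain ⟨z, hz⟩ := hZ
  refine card_add_card_le_of_notMem_add (g := g - z) fun h ↦ hg ?_
  exact mem_add.2 ⟨g - z, h, z, hz, sub_add_cancel g z⟩

theorem exists_addSubgroup_of_notMem_add_add (hX : X.Nonempty) (hY : Y.Nonempty)
    (hZ : Z.Nonempty) (hg : g ∉ X + Y + Z) :
    ∃ S : AddSubgroup K, S ≠ ⊤ ∧ ∃ k, #X + #Y ≤ (k + 1) * Nat.card S ∧
      k * Nat.card S + #Z ≤ Nat.card K := by
  obtain ⟨B, hB, hBXY, hcard⟩ := exists_subset_add_card_add_card_le hX hY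
  have hBZ : #B + #Z ≤ Nat.card K :=
    card_add_card_le_of_notMem_add fun h ↦ hg (add_subset_add_right hBXY h)
  have hdvd := card_stabilizer_dvd_card B
  refine ⟨AddAction.stabilizer K B, fun htop ↦ ?_, ?_⟩
  · rw [htop, AddSubgroup.card_top] at hdvd
    have := Nat.le_of_dvd hB.card_pos hdvd
    have := hZ.card_pos
    omega
  · obtain ⟨k, hk⟩ := hdvd
    rw [mul_comm] at hk
    exact ⟨k, by rwa [hk, ← Nat.succ_mul] at hcard, hk ▸ hBZ⟩

theorem mul_card_add_card_add_card_le_of_notMem_add_add {p : ℕ}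
    (hp : ∀ S : AddSubgroup K, S ≠ ⊤ → p ≤ S.index) (hX : X.Nonempty) (hY : Y.Nonempty)
    (hZ : Z.Nonempty) (hg : g ∉ X + Y + Z) :
    p * (#X + #Y + #Z) ≤ (p + 1) * Nat.card K := by
  obtain ⟨S, hS, k, hXY, hkZ⟩ := exists_addSubgroup_of_notMem_add_add hX hY hZ hg
  have hsum : #X + #Y + #Z ≤ Nat.card K + Nat.card S := by linarith
  have hpS : p * Nat.card S ≤ Nat.card K := by
    rw [← S.index_mul_card]
    exact Nat.mul_le_mul_right _ (hp S hS)
  calc p * (#X + #Y + #Z) ≤ p * (Nat.card K + Nat.card S) := Nat.mul_le_mul_left p hsum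
    _ ≤ (p + 1) * Nat.card K := by linarith

theorem ten_mul_card_le_of_notMem_add_add_self (hK : (Nat.card K).Coprime 6)
    (hX : Nat.card K < 2 * #X) (hg : g ∉ X + Y + Y) : 10 * #Y ≤ 3 * Nat.card K := by
  obtain rfl | hY := Y.eq_empty_or_nonempty
  · simp
  obtain ⟨S, hS, k, hXY, hkY⟩ :=
    exists_addSubgroup_of_notMem_add_add (card_pos.1 (by omega)) hY hY hg
  obtain ⟨hfive, hsix⟩ := five_le_index_and_index_ne_six hK hS
  rw [← S.index_mul_card] at hX hkY ⊢
  set t := S.index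
  set d := Nat.card S
  -- Either `#Y ≤ (t - k) * d` or `#Y ≤ (k + 1) * d - #X` is strong enough; `t = 6`, `k = 4` is
  -- the only case with `5 ≤ t` in which neither is.
  have hk : 7 * t ≤ 10 * k ∨ 10 * (k + 1) ≤ 8 * t := by omega
  obtain hk | hk := hk
  all_goals
    have := Nat.mul_le_mul_right d hk
    linarith

end MissingElement

theorem bijective_add_nsmul_of_card_prime {Q : Type*} [AddCommGroup Q] {p : ℕ}
    [Fact p.Prime] (hQ : Nat.card Q = p) (c : Q) {e : Q} (he : e ≠ 0) :
    Bijective fun i : Fin p ↦ c + (i : ℕ) • e := by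
  have : Finite Q := Nat.finite_of_card_ne_zero (hQ ▸ (Fact.out : p.Prime).ne_zero)
  have horder : addOrderOf e = p := addOrderOf_eq_prime (by rw [← hQ, card_nsmul_eq_zero']) he
  refine (Nat.bijective_iff_injective_and_card _).2 ⟨fun i j hij ↦ Fin.ext ?_, by simp [hQ]⟩
  exact nsmul_injOn_Iio_addOrderOf (by simp [horder]) (by simp [horder]) (add_left_cancel hij)

theorem ncard_add_two_le_card_of_notMem {α : Type*} [Finite α] {s : Set α} {a b : α} (hab : a ≠ b)
    (ha : a ∉ s) (hb : b ∉ s) : s.ncard + 2 ≤ Nat.card α := by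
  rw [← Set.ncard_add_ncard_compl s, Nat.add_le_add_iff_left]
  exact (Set.one_lt_ncard_iff).2 ⟨a, b, ha, hb, hab⟩

section CosetSlice

variable {G : Type*} [AddCommGroup G] {F : AddSubgroup G}

/-- The part of `A` in the coset `q` of `F`, translated into `F` by the chosen representative
`q.out`; it makes statements about subsets of the group `F` applicable to the cosets of `F`. -/
noncomputable def cosetSlice (A : Finset G) (q : G ⧸ F) : Finset F :=
  A.preimage (fun f : F ↦ q.out + f) fun _ _ _ _ h ↦ Subtype.ext (add_left_cancel h)

theorem mem_cosetSlice {A : Finset G} {q : G ⧸ F} {f : F} :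
    f ∈ cosetSlice A q ↔ q.out + (f : G) ∈ A :=
  mem_preimage

theorem card_cosetSlice [DecidableEq (G ⧸ F)] (A : Finset G) (q : G ⧸ F) :
    #(cosetSlice A q) = #{x ∈ A | QuotientAddGroup.mk x = q} := by
  refine card_bij (fun f _ ↦ q.out + (f : G)) (fun f hf ↦ ?_)
    (fun _ _ _ _ h ↦ Subtype.ext (add_left_cancel h)) fun x hx ↦ ?_
  · rw [mem_filter, QuotientAddGroup.mk_add_of_mem _ f.2, QuotientAddGroup.out_eq']
    exact ⟨mem_cosetSlice.1 hf, rfl⟩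
  · obtain ⟨hxA, hxq⟩ := mem_filter.1 hx
    have hmem : -q.out + x ∈ F := by
      rw [← QuotientAddGroup.eq, QuotientAddGroup.out_eq', hxq]
    exact ⟨⟨_, hmem⟩, mem_cosetSlice.2 (by rwa [add_neg_cancel_left]), add_neg_cancel_left _ _⟩

theorem card_cosetSlice_mk (A : Finset G) (c : G) :
    #(cosetSlice A (c : G ⧸ F)) = (A ∩ (c +ᵥ (F : Set G)) : Set G).ncard := by
  classical
  rw [card_cosetSlice, ← Set.ncard_coe_finset, coe_filter,
    ← QuotientAddGroup.eq_class_eq_leftCoset]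
  rfl

theorem sum_card_cosetSlice [Fintype (G ⧸ F)] (A : Finset G) :
    ∑ q : G ⧸ F, #(cosetSlice A q) = #A := by
  classical
  simp only [card_cosetSlice]
  exact (card_eq_sum_card_fiberwise fun _ _ ↦ mem_coe.2 (mem_univ _)).symm

theorem cosetSlice_nonempty_iff {A : Finset G} {q : G ⧸ F} :
    (cosetSlice A q).Nonempty ↔ q ∈ (QuotientAddGroup.mk '' (A : Set G) : Set (G ⧸ F)) := by
  classical
  rw [← card_pos, card_cosetSlice, card_pos, filter_nonempty_iff]
  rfl

theorem exists_notMem_cosetSlice_add_add [DecidableEq G] {A : Finset G} {g : G}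
    (hg : g ∉ A + A + A) {q₁ q₂ q₃ : G ⧸ F} (hq : q₁ + q₂ + q₃ = g) :
    ∃ f : F, f ∉ cosetSlice A q₁ + cosetSlice A q₂ + cosetSlice A q₃ := by
  have hmem : -(q₁.out + q₂.out + q₃.out) + g ∈ F := by
    rw [← QuotientAddGroup.eq]
    simp [hq]
  refine ⟨⟨_, hmem⟩, fun hf ↦ hg ?_⟩
  obtain ⟨_, hf₁₂, f₃, hf₃, hsum⟩ := mem_add.1 hf
  obtain ⟨f₁, hf₁, f₂, hf₂, rfl⟩ := mem_add.1 hf₁₂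
  have hgsum : (q₁.out + f₁) + (q₂.out + f₂) + (q₃.out + f₃) = g := by
    have hval : (f₁ + f₂ + f₃ : G) = -(q₁.out + q₂.out + q₃.out) + g := congrArg Subtype.val hsum
    calc _ = q₁.out + q₂.out + q₃.out + (f₁ + f₂ + f₃ : G) := by abel
      _ = g := by rw [hval, add_neg_cancel_left]
  rw [← hgsum]
  exact add_mem_add (add_mem_add (mem_cosetSlice.1 hf₁) (mem_cosetSlice.1 hf₂))
    (mem_cosetSlice.1 hf₃)

variable [Finite F] [DecidableEq G]

theorem cosetSlice_eq_empty_of_card_lt {A : Finset G} {g : G} (hg : g ∉ A + A + A) {q m : G ⧸ F}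
    (hqm : q + q + m = g) (hq : Nat.card F < 2 * #(cosetSlice A q)) : cosetSlice A m = ∅ := by
  by_contra hne
  obtain ⟨f, hf⟩ := exists_notMem_cosetSlice_add_add hg hqm
  have := card_add_card_le_of_notMem_add_add (nonempty_iff_ne_empty.2 hne) hf
  omega

theorem five_mul_card_cosetSlice_add_add_le (hcop : (Nat.card F).Coprime 6) {A : Finset G} {g : G}
    (hg : g ∉ A + A + A) {q₁ q₂ q₃ : G ⧸ F} (hq : q₁ + q₂ + q₃ = g)
    (h₁ : (cosetSlice A q₁).Nonempty) (h₂ : (cosetSlice A q₂).Nonempty)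
    (h₃ : (cosetSlice A q₃).Nonempty) :
    5 * (#(cosetSlice A q₁) + #(cosetSlice A q₂) + #(cosetSlice A q₃)) ≤ 6 * Nat.card F := by
  obtain ⟨f, hf⟩ := exists_notMem_cosetSlice_add_add hg hq
  exact mul_card_add_card_add_card_le_of_notMem_add_add
    (fun _ hS ↦ (five_le_index_and_index_ne_six hcop hS).1) h₁ h₂ h₃ hf

theorem ten_mul_card_cosetSlice_le (hcop : (Nat.card F).Coprime 6) {A : Finset G} {g : G}
    (hg : g ∉ A + A + A) {q r : G ⧸ F} (hqr : q + r + r = g)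
    (hq : Nat.card F < 2 * #(cosetSlice A q)) : 10 * #(cosetSlice A r) ≤ 3 * Nat.card F := by
  obtain ⟨f, hf⟩ := exists_notMem_cosetSlice_add_add hg hqr
  exact ten_mul_card_le_of_notMem_add_add_self hcop hq hf

theorem two_mul_card_le_of_forall_nonempty (hF : F.index = 5) (hcop : (Nat.card F).Coprime 6)
    {A : Finset G} {g : G} (hg : g ∉ A + A + A) {q m : G ⧸ F} (hqm : q + q + m = g)
    (hq : Nat.card F < 2 * #(cosetSlice A q)) (hne : ∀ r ≠ m, (cosetSlice A r).Nonempty) :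
    2 * #A ≤ 3 * Nat.card F := by
  have : Finite (G ⧸ F) := Nat.finite_of_card_ne_zero (hF.trans_ne (by decide))
  have := Fintype.ofFinite (G ⧸ F)
  have : Fact (Nat.Prime 5) := ⟨Nat.prime_five⟩
  have hm : #(cosetSlice A m) = 0 := card_eq_zero.2 (cosetSlice_eq_empty_of_card_lt hg hqm hq)
  obtain ⟨e, rfl⟩ : ∃ e, q = m + e := ⟨q - m, (add_sub_cancel m q).symm⟩
  have he : e ≠ 0 := by
    rintro rfl
    rw [add_zero] at hq
    omega
  have hg_eq : (g : G ⧸ F) = m + m + m + 7 • e := by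
    have he_five : 5 • e = 0 := by
      rw [← hF]
      exact card_nsmul_eq_zero'
    rw [← hqm, ← add_zero (_ + m), ← he_five]
    abel
  have hbij := bijective_add_nsmul_of_card_prime hF m he
  have hne_nsmul (i : Fin 5) (hi : i ≠ 0) : (cosetSlice A (m + (i : ℕ) • e)).Nonempty :=
    hne _ fun h ↦ hi (hbij.injective (by simpa using h))
  have h₁₂₄ := five_mul_card_cosetSlice_add_add_le hcop hg
    (q₁ := m + e) (q₂ := m + 2 • e) (q₃ := m + 4 • e) (by rw [hg_eq]; abel)
    (card_pos.1 (by omega)) (hne_nsmul 2 (by decide)) (hne_nsmul 4 (by decide))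
  have h₃ := ten_mul_card_cosetSlice_le hcop hg (r := m + 3 • e) (by rw [hg_eq]; abel) hq
  have hsum := sum_card_cosetSlice (F := F) A
  rw [← hbij.sum_comp, Fin.sum_univ_five] at hsum
  change #(cosetSlice A (m + 0 • e)) + #(cosetSlice A (m + 1 • e)) + #(cosetSlice A (m + 2 • e)) +
    #(cosetSlice A (m + 3 • e)) + #(cosetSlice A (m + 4 • e)) = #A at hsum
  rw [zero_nsmul, add_zero, one_nsmul] at hsum
  omega

end CosetSlice

theorem exists_notMem_add_add_of_itSum_three_ne_univ {G : Type*} [AddCommGroup G] [DecidableEq G]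
    {A : Finset G} (hA : itSum 3 (A : Set G) ≠ Set.univ) : ∃ g, g ∉ A + A + A := by
  obtain ⟨g, hg⟩ := (Set.ne_univ_iff_exists_notMem _).1 hA
  refine ⟨g, ?_⟩
  simpa only [itSum, Set.singleton_add, zero_add, Set.image_id', ← coe_add, mem_coe] using hg

theorem stmt4_general {G : Type*} [AddCommGroup G] [Finite G] (hG : (Nat.card G).Coprime 6)
    (A : Set G) (hA : (A.ncard : ℝ) > 0.3 * Nat.card G) (h3A : itSum 3 A ≠ Set.univ)
    (F : AddSubgroup G) (hF : F.index = 5)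
    (hdens : ∃ c : G, ((A ∩ (c +ᵥ (F : Set G))).ncard : ℝ) > 0.5 * Nat.card F) :
    (QuotientAddGroup.mk '' A : Set (G ⧸ F)).ncard ≤ 3 := by
  classical
  lift A to Finset G using A.toFinite
  obtain ⟨g, hg⟩ := exists_notMem_add_add_of_itSum_three_ne_univ h3A
  obtain ⟨c, hc⟩ := hdens
  rw [← card_cosetSlice_mk] at hc
  have hdense : Nat.card F < 2 * #(cosetSlice A (c : G ⧸ F)) := by
    have : (Nat.card F : ℝ) < 2 * #(cosetSlice A (c : G ⧸ F)) := by linarith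
    exact_mod_cast this
  have hlarge : 3 * Nat.card F < 2 * #A := by
    rw [Set.ncard_coe_finset, ← F.card_mul_index, hF] at hA
    push_cast at hA
    have : (3 * Nat.card F : ℝ) < 2 * #A := by linarith
    exact_mod_cast this
  have hcop : (Nat.card F).Coprime 6 := hG.coprime_dvd_left F.card_addSubgroup_dvd_card
  have hqm : (c : G ⧸ F) + c + (g - c - c) = g := by abel
  have hm := cosetSlice_eq_empty_of_card_lt hg hqm hdense
  obtain ⟨r, hr, hr_empty⟩ : ∃ r ≠ (g - c - c : G ⧸ F), ¬ (cosetSlice A r).Nonempty := by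
    by_contra! hne
    exact hlarge.not_ge (two_mul_card_le_of_forall_nonempty hF hcop hg hqm hdense hne)
  have hcard := ncard_add_two_le_card_of_notMem hr (mt cosetSlice_nonempty_iff.2 hr_empty)
    (mt cosetSlice_nonempty_iff.2 (not_nonempty_iff_eq_empty.2 hm))
  rw [← AddSubgroup.index, hF] at hcard
  omega

/-- Let `A ⊆ (ℤ/5ℤ)ⁿ` with `|A| > 0.3·5ⁿ` and `3A ≠ G`. If `A` has density larger
than `0.5` in some coset of an index-5 subgroup `F`, then `A` meets at most three
cosets of `F`. -/
theorem stmt4 (n : ℕ) (hn : 1 ≤ n) (A : Set (Fin n → ZMod 5))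
    (hA : (A.ncard : ℝ) > 0.3 * 5 ^ n)
    (h3A : itSum 3 A ≠ Set.univ)
    (F : AddSubgroup (Fin n → ZMod 5)) (hF : F.index = 5)
    (hdens : ∃ c : Fin n → ZMod 5,
      ((A ∩ (c +ᵥ (F : Set (Fin n → ZMod 5)))).ncard : ℝ) > 0.5 * Nat.card F) :
    (QuotientAddGroup.mk '' A : Set ((Fin n → ZMod 5) ⧸ F)).ncard ≤ 3 := by
  have hcop : (5 ^ n).Coprime 6 := Nat.Coprime.pow_left n (by decide)
  exact stmt4_general (by simpa using hcop) A (by simpa using hA) h3A F hF hdens
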